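/- arXiv:1306.5829 — 2 statements merged into one kernel-verified Lean document; each statement's English description precedes it below -/
import Mathlib

section
/- Let f : ℝ → ℝ≥0 be a one-dimensional isotropic logconcave probability density, i.e., ∫_ℝ f = 1, ∫_ℝ x f(x) dx = 0, and ∫_ℝ x² f(x) dx = 1. Let π_f denote the corresponding probability measure. Then for every partition of ℝ into three measurable sets S₁, S₂, S₃, π_f(S₃) ≥ (ln 2) · d(S₁, S₂) · π_f(S₁) · π_f(S₂), where d(S₁, S₂) = inf{|s − t| : s ∈ S₁, t ∈ S₂} is the distance between S₁ and S₂. -/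
open MeasureTheory Real Set

/-!
Let `X`, `Y` be independent with the logconcave density `f`, and let `μ` be their law. Logconcavity
makes the hazard rate `f t / μ [t, ∞)` increasing and the reversed hazard rate `f t / μ (-∞, t)`
decreasing. Integrating the product of the tails against these bounds, separately over `(-∞, t)` and
`[t, ∞)`, gives the profile inequality
`μ (-∞, t) * μ [t, ∞) ≤ f t * 2 ∫ μ (-∞, x) * μ [x, ∞) dx = f t * E |X - Y|`.

A segment from `S₁` to `S₂` meets the complement of `S₁ ∪ S₂` in length at least `d`. The event that
`X` and `Y` fall one in each set has probability `2 * μ S₁ * μ S₂`, and `t` separates `X` from `Y`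
with probability `2 * μ (-∞, t) * μ [t, ∞)`. So by Fubini `d * μ S₁ * μ S₂` is at most the integral
of `μ (-∞, t) * μ [t, ∞)` over that complement, hence at most `E |X - Y| * μ (S₁ ∪ S₂)ᶜ`. Finally
`E |X - Y| ≤ √(2 Var X)`, and `√2 ≤ 1 / log 2`.
-/

open ProbabilityTheory
open scoped ENNReal

/-- Log-concavity of a real-valued function, in the multiplicative form that allows the value `0`;
convexity of the support is part of it. -/
structure LogConcave {E : Type*} [AddCommGroup E] [Module ℝ E] (f : E → ℝ) : Prop where
  nonneg : ∀ x, 0 ≤ f x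
  rpow_mul_rpow_le : ∀ x y, ∀ l ∈ Icc (0 : ℝ) 1,
    f x ^ l * f y ^ (1 - l) ≤ f (l • x + (1 - l) • y)

namespace LogConcave

theorem mul_le_mul_combo {E : Type*} [AddCommGroup E] [Module ℝ E] {f : E → ℝ}
    (hf : LogConcave f) (x y : E) {l : ℝ} (hl : l ∈ Icc (0 : ℝ) 1) :
    f x * f y ≤ f (l • x + (1 - l) • y) * f ((1 - l) • x + l • y) := by
  have rpow_split (z : E) : f z ^ l * f z ^ (1 - l) = f z := by
    rw [← rpow_add_of_nonneg (hf.nonneg z) hl.1 (sub_nonneg.2 hl.2), add_sub_cancel, rpow_one]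
  have hl' : 1 - l ∈ Icc (0 : ℝ) 1 := ⟨sub_nonneg.2 hl.2, sub_le_self 1 hl.1⟩
  have h₁ := hf.rpow_mul_rpow_le x y l hl
  have h₂ := hf.rpow_mul_rpow_le x y (1 - l) hl'
  rw [sub_sub_cancel] at h₂
  have hpow (z : E) (r : ℝ) : 0 ≤ f z ^ r := rpow_nonneg (hf.nonneg z) r
  calc f x * f y
      = (f x ^ l * f x ^ (1 - l)) * (f y ^ l * f y ^ (1 - l)) := by rw [rpow_split, rpow_split]
    _ = (f x ^ l * f y ^ (1 - l)) * (f x ^ (1 - l) * f y ^ l) := by ring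
    _ ≤ _ := mul_le_mul h₁ h₂ (mul_nonneg (hpow _ _) (hpow _ _)) (hf.nonneg _)

theorem mul_le_mul_of_add_eq_add {f : ℝ → ℝ} (hf : LogConcave f) {a b c d : ℝ}
    (hab : a ≤ b) (hbd : b ≤ d) (hsum : a + d = b + c) : f a * f d ≤ f b * f c := by
  rcases (hab.trans hbd).eq_or_lt with rfl | had
  · obtain rfl : a = b := le_antisymm hab hbd
    rw [add_left_cancel hsum]
  have hpos : 0 < d - a := sub_pos.2 had
  have hl : (d - b) / (d - a) ∈ Icc (0 : ℝ) 1 :=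
    ⟨div_nonneg (sub_nonneg.2 hbd) hpos.le, (div_le_one hpos).2 (by linarith)⟩
  convert hf.mul_le_mul_combo a d hl using 3 <;> simp only [smul_eq_mul] <;> field_simp
  · ring
  · linear_combination (a - d) * hsum

end LogConcave

theorem sq_measure_le_two_mul_lintegral {α : Type*} [MeasurableSpace α] (μ : Measure α) [SFinite μ]
    {r : α → α → Prop} [Std.Total r] (hr : MeasurableSet {p : α × α | r p.1 p.2}) (S : Set α) :
    μ S ^ 2 ≤ 2 * ∫⁻ x in S, μ {y | r x y} ∂μ := by
  set ν := μ.restrict S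
  set T := {p : α × α | r p.1 p.2}
  have hswap : ν.prod ν (Prod.swap ⁻¹' T) = ν.prod ν T :=
    (Measure.measurePreserving_swap (μ := ν) (ν := ν)).measure_preimage hr.nullMeasurableSet
  have hcover : (univ : Set (α × α)) ⊆ T ∪ Prod.swap ⁻¹' T :=
    fun p _ ↦ Std.Total.total (r := r) p.1 p.2
  calc μ S ^ 2 = ν.prod ν univ := by
        rw [← univ_prod_univ, Measure.prod_prod, Measure.restrict_apply_univ, sq]
    _ ≤ ν.prod ν T + ν.prod ν (Prod.swap ⁻¹' T) :=
        (measure_mono hcover).trans (measure_union_le _ _)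
    _ = 2 * ∫⁻ x in S, ν {y | r x y} ∂μ := by
        rw [hswap, ← two_mul, Measure.prod_apply hr]
        rfl
    _ ≤ 2 * ∫⁻ x in S, μ {y | r x y} ∂μ := by
        gcongr
        exact Measure.restrict_le_self

section Fubini

variable {α : Type*} [LinearOrder α] [TopologicalSpace α] [OrderClosedTopology α]
  [MeasurableSpace α] [OpensMeasurableSpace α]

theorem prod_setOf_mem_uIoc (μ : Measure α) [SFinite μ] (t : α) :
    μ.prod μ {p | t ∈ uIoc p.1 p.2} = 2 * (μ (Iio t) * μ (Ici t)) := by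
  have hsplit : {p : α × α | t ∈ uIoc p.1 p.2} = Iio t ×ˢ Ici t ∪ Ici t ×ˢ Iio t := by
    ext p
    simp [mem_uIoc, and_comm]
  have hdisj : Disjoint (Iio t ×ˢ Ici t) (Ici t ×ˢ Iio t) :=
    Disjoint.set_prod_left (Iio_disjoint_Ici le_rfl) _ _
  rw [hsplit, measure_union hdisj (measurableSet_Ici.prod measurableSet_Iio),
    Measure.prod_prod, Measure.prod_prod, mul_comm (μ (Ici t)), two_mul]

variable [SecondCountableTopology α]

theorem measurableSet_setOf_snd_mem_uIoc :
    MeasurableSet {q : (α × α) × α | q.2 ∈ uIoc q.1.1 q.1.2} :=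
  (measurableSet_lt (by fun_prop) (by fun_prop)).inter
    (measurableSet_le (by fun_prop) (by fun_prop))

theorem lintegral_measure_uIoc (μ ν : Measure α) [SFinite μ] [SFinite ν] :
    ∫⁻ p, ν (uIoc p.1 p.2) ∂μ.prod μ = 2 * ∫⁻ t, μ (Iio t) * μ (Ici t) ∂ν := by
  have hmeas := measurableSet_setOf_snd_mem_uIoc (α := α)
  calc ∫⁻ p, ν (uIoc p.1 p.2) ∂μ.prod μ
      = ∫⁻ t, μ.prod μ {p | t ∈ uIoc p.1 p.2} ∂ν :=
        (Measure.prod_apply hmeas).symm.trans (Measure.prod_apply_symm hmeas)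
    _ = 2 * ∫⁻ t, μ (Iio t) * μ (Ici t) ∂ν := by
        simp_rw [prod_setOf_mem_uIoc]
        rw [lintegral_const_mul' _ _ ENNReal.ofNat_ne_top]

end Fubini

theorem lintegral_edist_eq_two_mul_lintegral (μ : Measure ℝ) [SFinite μ] :
    ∫⁻ p, edist p.1 p.2 ∂μ.prod μ = 2 * ∫⁻ t, μ (Iio t) * μ (Ici t) := by
  rw [← lintegral_measure_uIoc]
  simp_rw [Real.volume_uIoc, ← Real.dist_eq, ← edist_dist, edist_comm]

theorem le_edist_of_mem_closure {α : Type*} [PseudoEMetricSpace α] {S T : Set α} {δ : ℝ≥0∞}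
    (hdist : ∀ s ∈ S, ∀ t ∈ T, δ ≤ edist s t) {a b : α} (ha : a ∈ closure S)
    (hb : b ∈ closure T) : δ ≤ edist a b := by
  have hsub : closure (S ×ˢ T) ⊆ {p : α × α | δ ≤ edist p.1 p.2} :=
    closure_minimal (fun p hp ↦ hdist p.1 hp.1 p.2 hp.2)
      (isClosed_le continuous_const continuous_edist)
  have hmem : (a, b) ∈ closure (S ×ˢ T) := by
    rw [closure_prod_eq]
    exact ⟨ha, hb⟩
  exact hsub hmem

section ThreeSets

variable {S₁ S₂ : Set ℝ} {δ : ℝ≥0∞}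

theorem le_volume_compl_inter_Ioc (hdist : ∀ s ∈ S₁, ∀ t ∈ S₂, δ ≤ edist s t) {x y : ℝ}
    (hx : x ∈ S₁) (hy : y ∈ S₂) (hxy : x ≤ y) : δ ≤ volume ((S₁ ∪ S₂)ᶜ ∩ Ioc x y) := by
  have bddA : BddAbove (S₁ ∩ Icc x y) := bddAbove_Icc.mono inter_subset_right
  have hxA : x ∈ S₁ ∩ Icc x y := ⟨hx, left_mem_Icc.2 hxy⟩
  set a := sSup (S₁ ∩ Icc x y)
  have hay : a ≤ y := csSup_le ⟨x, hxA⟩ fun z hz ↦ hz.2.2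
  have bddB : BddBelow (S₂ ∩ Icc a y) := bddBelow_Icc.mono inter_subset_right
  have hyB : y ∈ S₂ ∩ Icc a y := ⟨hy, right_mem_Icc.2 hay⟩
  set b := sInf (S₂ ∩ Icc a y)
  have hab : a ≤ b := le_csInf ⟨y, hyB⟩ fun z hz ↦ hz.2.1
  have haS : a ∈ closure S₁ := closure_mono inter_subset_left (csSup_mem_closure ⟨x, hxA⟩ bddA)
  have hbS : b ∈ closure S₂ := closure_mono inter_subset_left (csInf_mem_closure ⟨y, hyB⟩ bddB)
  have hxa : x ≤ a := le_csSup bddA hxA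
  have hby : b ≤ y := csInf_le bddB hyB
  have hgap : Ioo a b ⊆ (S₁ ∪ S₂)ᶜ ∩ Ioc x y := by
    refine fun z hz ↦ ⟨?_, hxa.trans_lt hz.1, hz.2.le.trans hby⟩
    rintro (hz₁ | hz₂)
    · exact hz.1.not_ge (le_csSup bddA ⟨hz₁, hxa.trans hz.1.le, hz.2.le.trans hby⟩)
    · exact hz.2.not_ge (csInf_le bddB ⟨hz₂, hz.1.le, hz.2.le.trans hby⟩)
  calc δ ≤ edist a b := le_edist_of_mem_closure hdist haS hbS
    _ = volume (Ioo a b) := by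
        rw [edist_comm, edist_dist, Real.dist_eq, abs_of_nonneg (sub_nonneg.2 hab), volume_Ioo]
    _ ≤ _ := measure_mono hgap

theorem le_volume_compl_inter_uIoc (hdist : ∀ s ∈ S₁, ∀ t ∈ S₂, δ ≤ edist s t) {x y : ℝ}
    (hx : x ∈ S₁) (hy : y ∈ S₂) : δ ≤ volume ((S₁ ∪ S₂)ᶜ ∩ uIoc x y) := by
  rcases le_total x y with hxy | hyx
  · simpa only [uIoc_of_le hxy] using le_volume_compl_inter_Ioc hdist hx hy hxy
  · simpa only [uIoc_of_ge hyx, union_comm S₁] using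
      le_volume_compl_inter_Ioc (fun t ht s hs ↦ edist_comm s t ▸ hdist s hs t ht) hy hx hyx

theorem mul_measure_mul_measure_le_lintegral_compl (μ : Measure ℝ) [SFinite μ]
    (hm₁ : MeasurableSet S₁) (hm₂ : MeasurableSet S₂)
    (hdist : ∀ s ∈ S₁, ∀ t ∈ S₂, δ ≤ edist s t) :
    δ * (μ S₁ * μ S₂) ≤ ∫⁻ t in (S₁ ∪ S₂)ᶜ, μ (Iio t) * μ (Ici t) := by
  rcases eq_or_ne δ 0 with rfl | hδ
  · simp
  have hdisj : Disjoint (S₁ ×ˢ S₂) (S₂ ×ˢ S₁) := by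
    refine Disjoint.set_prod_left (disjoint_left.2 fun x h₁ h₂ ↦ hδ ?_) _ _
    simpa using hdist x h₁ x h₂
  set ν := volume.restrict (S₁ ∪ S₂)ᶜ with hν
  have hsub : S₁ ×ˢ S₂ ∪ S₂ ×ˢ S₁ ⊆ {p | δ ≤ ν (uIoc p.1 p.2)} := by
    rintro p (⟨h₁, h₂⟩ | ⟨h₂, h₁⟩) <;>
      rw [mem_ofPred_eq, hν, Measure.restrict_apply measurableSet_uIoc, inter_comm]
    · exact le_volume_compl_inter_uIoc hdist h₁ h₂
    · exact uIoc_comm p.1 p.2 ▸ le_volume_compl_inter_uIoc hdist h₁ h₂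
  refine (ENNReal.mul_le_mul_iff_right two_ne_zero ENNReal.ofNat_ne_top).1 ?_
  calc 2 * (δ * (μ S₁ * μ S₂))
      = δ * μ.prod μ (S₁ ×ˢ S₂ ∪ S₂ ×ˢ S₁) := by
        rw [measure_union hdisj (hm₂.prod hm₁), Measure.prod_prod, Measure.prod_prod]
        ring
    _ ≤ δ * μ.prod μ {p | δ ≤ ν (uIoc p.1 p.2)} := by gcongr
    _ ≤ ∫⁻ p, ν (uIoc p.1 p.2) ∂μ.prod μ :=
        mul_meas_ge_le_lintegral
          (measurable_measure_prodMk_left measurableSet_setOf_snd_mem_uIoc) δ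
    _ = 2 * ∫⁻ t, μ (Iio t) * μ (Ici t) ∂ν := lintegral_measure_uIoc μ ν

end ThreeSets

/-- With `a = μ [t, ∞)`, `b = f t` and `h x = μ [x, ∞)` the hypothesis `hab` says that the hazard
rate `f x / μ [x, ∞)` is at most its value at `t`; the mirror image covers the other tail. -/
theorem sq_withDensity_mul_le {α : Type*} [MeasurableSpace α] {ν : Measure α} [SFinite ν]
    {φ : α → ℝ≥0∞} (hφ : AEMeasurable φ ν) {r : α → α → Prop} [Std.Total r]
    (hr : MeasurableSet {p : α × α | r p.1 p.2}) {S : Set α} (hS : MeasurableSet S)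
    {h : α → ℝ≥0∞} {a b : ℝ≥0∞} (hb : b ≠ ∞) (hab : ∀ x ∈ S, φ x * a ≤ b * h x) :
    ν.withDensity φ S ^ 2 * a ≤ 2 * (b * ∫⁻ x in S, h x * ν.withDensity φ {y | r x y} ∂ν) := by
  set μ := ν.withDensity φ with hμ
  have hk : Measurable fun x ↦ μ {y | r x y} := measurable_measure_prodMk_left hr
  calc μ S ^ 2 * a ≤ 2 * (∫⁻ x in S, μ {y | r x y} ∂μ) * a := by
        gcongr
        exact sq_measure_le_two_mul_lintegral μ hr S
    _ = 2 * ∫⁻ x in S, φ x * a * μ {y | r x y} ∂ν := by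
        rw [hμ, restrict_withDensity hS,
          lintegral_withDensity_eq_lintegral_mul₀ hφ.restrict hk.aemeasurable, mul_assoc,
          ← lintegral_mul_const'' _ (hφ.restrict.mul hk.aemeasurable)]
        simp only [Pi.mul_apply, mul_right_comm, hμ]
    _ ≤ 2 * ∫⁻ x in S, b * (h x * μ {y | r x y}) ∂ν := by
        gcongr 2 * ?_
        refine setLIntegral_mono' hS fun x hx ↦ ?_
        rw [← mul_assoc]
        exact mul_le_mul_left (hab x hx) _
    _ = 2 * (b * ∫⁻ x in S, h x * μ {y | r x y} ∂ν) := by rw [lintegral_const_mul' _ _ hb]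

/-- The measure `π_f` with density `f` with respect to the volume. -/
noncomputable abbrev densityMeasure {α : Type*} [MeasureSpace α] (f : α → ℝ) : Measure α :=
  volume.withDensity fun x ↦ ENNReal.ofReal (f x)

theorem ofReal_mul_densityMeasure_preimage_add_right_le {G : Type*} [MeasureSpace G] [AddGroup G]
    [MeasurableAdd G] [(volume : Measure G).IsAddRightInvariant] {f : G → ℝ} {a b : ℝ} (ha : 0 ≤ a)
    (hb : 0 ≤ b) {g : G} {S : Set G} (hS : MeasurableSet S)
    (hle : ∀ y ∈ (· + g) ⁻¹' S, a * f y ≤ b * f (y + g)) :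
    ENNReal.ofReal a * densityMeasure f ((· + g) ⁻¹' S) ≤
      ENNReal.ofReal b * densityMeasure f S := by
  have hS' : MeasurableSet ((· + g) ⁻¹' S) := measurable_add_const g hS
  rw [withDensity_apply _ hS, withDensity_apply _ hS',
    ← (measurePreserving_add_right volume g).setLIntegral_comp_preimage_emb
      (measurableEmbedding_addRight g) _ S,
    ← lintegral_const_mul' _ _ ENNReal.ofReal_ne_top,
    ← lintegral_const_mul' _ _ ENNReal.ofReal_ne_top]
  refine setLIntegral_mono' hS' fun y hy ↦ ?_
  rw [← ENNReal.ofReal_mul ha, ← ENNReal.ofReal_mul hb]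
  exact ENNReal.ofReal_le_ofReal (hle y hy)

namespace LogConcave

variable {f : ℝ → ℝ}

theorem ofReal_mul_densityMeasure_Iio_le (hf : LogConcave f) {t x : ℝ} (htx : t ≤ x) :
    ENNReal.ofReal (f x) * densityMeasure f (Iio t) ≤
      ENNReal.ofReal (f t) * densityMeasure f (Iio x) := by
  have hshift : (· + (x - t)) ⁻¹' Iio x = Iio t := by
    rw [preimage_add_const_Iio, sub_sub_cancel]
  rw [← hshift]
  refine ofReal_mul_densityMeasure_preimage_add_right_le (hf.nonneg x) (hf.nonneg t)
    measurableSet_Iio fun y hy ↦ ?_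
  have hyt : y < t := hshift.subset hy
  rw [mul_comm]
  exact hf.mul_le_mul_of_add_eq_add hyt.le htx (by ring)

theorem ofReal_mul_densityMeasure_Ici_le (hf : LogConcave f) {t x : ℝ} (hxt : x ≤ t) :
    ENNReal.ofReal (f x) * densityMeasure f (Ici t) ≤
      ENNReal.ofReal (f t) * densityMeasure f (Ici x) := by
  have hshift : (· + (x - t)) ⁻¹' Ici x = Ici t := by
    rw [preimage_add_const_Ici, sub_sub_cancel]
  rw [← hshift]
  refine ofReal_mul_densityMeasure_preimage_add_right_le (hf.nonneg x) (hf.nonneg t)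
    measurableSet_Ici fun y hy ↦ ?_
  have hty : t ≤ y := hshift.subset hy
  exact hf.mul_le_mul_of_add_eq_add hxt hty (by ring)

theorem sq_densityMeasure_Iio_mul_Ici_le (hf : LogConcave f) (hfm : AEMeasurable f) (t : ℝ) :
    densityMeasure f (Iio t) ^ 2 * densityMeasure f (Ici t) ≤
      2 * (ENNReal.ofReal (f t) *
        ∫⁻ x in Iio t, densityMeasure f (Iio x) * densityMeasure f (Ici x)) := by
  have h := sq_withDensity_mul_le hfm.ennreal_ofReal (r := (· ≥ ·))
    (measurableSet_le measurable_snd measurable_fst) (measurableSet_Iio (a := t))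
    (ENNReal.ofReal_ne_top (r := f t))
    fun x hx ↦ hf.ofReal_mul_densityMeasure_Ici_le (mem_Iio.1 hx).le
  simpa only [ge_iff_le, Iic_def, ← measure_congr Iio_ae_eq_Iic, mul_comm] using h

theorem sq_densityMeasure_Ici_mul_Iio_le (hf : LogConcave f) (hfm : AEMeasurable f) (t : ℝ) :
    densityMeasure f (Ici t) ^ 2 * densityMeasure f (Iio t) ≤
      2 * (ENNReal.ofReal (f t) *
        ∫⁻ x in Ici t, densityMeasure f (Iio x) * densityMeasure f (Ici x)) :=
  sq_withDensity_mul_le hfm.ennreal_ofReal (r := (· ≤ ·))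
    (measurableSet_le measurable_fst measurable_snd) measurableSet_Ici ENNReal.ofReal_ne_top
    fun _ hx ↦ hf.ofReal_mul_densityMeasure_Iio_le hx

theorem densityMeasure_Iio_mul_Ici_mul_univ_le (hf : LogConcave f) (hfm : AEMeasurable f) (t : ℝ) :
    densityMeasure f (Iio t) * densityMeasure f (Ici t) * densityMeasure f univ ≤
      ENNReal.ofReal (f t) *
        ∫⁻ p, edist p.1 p.2 ∂(densityMeasure f).prod (densityMeasure f) := by
  set μ := densityMeasure f
  have huniv : μ univ = μ (Iio t) + μ (Ici t) := by
    rw [← compl_Iio, measure_add_measure_compl measurableSet_Iio]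
  have hsplit := lintegral_add_compl (μ := volume) (fun x ↦ μ (Iio x) * μ (Ici x))
    (measurableSet_Iio (a := t))
  calc μ (Iio t) * μ (Ici t) * μ univ
      = μ (Iio t) ^ 2 * μ (Ici t) + μ (Ici t) ^ 2 * μ (Iio t) := by rw [huniv]; ring
    _ ≤ _ :=
        add_le_add (hf.sq_densityMeasure_Iio_mul_Ici_le hfm t)
          (hf.sq_densityMeasure_Ici_mul_Iio_le hfm t)
    _ = ENNReal.ofReal (f t) * ∫⁻ p, edist p.1 p.2 ∂μ.prod μ := by
        rw [lintegral_edist_eq_two_mul_lintegral, ← hsplit, compl_Iio]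
        ring

theorem mul_densityMeasure_mul_densityMeasure_mul_univ_le (hf : LogConcave f)
    (hfm : AEMeasurable f) {S₁ S₂ : Set ℝ} (hm₁ : MeasurableSet S₁) (hm₂ : MeasurableSet S₂)
    {δ : ℝ≥0∞} (hdist : ∀ s ∈ S₁, ∀ t ∈ S₂, δ ≤ edist s t) :
    δ * (densityMeasure f S₁ * densityMeasure f S₂) * densityMeasure f univ ≤
      (∫⁻ p, edist p.1 p.2 ∂(densityMeasure f).prod (densityMeasure f)) *
        densityMeasure f (S₁ ∪ S₂)ᶜ := by
  set μ := densityMeasure f with hμ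
  set E := ∫⁻ p, edist p.1 p.2 ∂μ.prod μ
  calc δ * (μ S₁ * μ S₂) * μ univ
      ≤ (∫⁻ t in (S₁ ∪ S₂)ᶜ, μ (Iio t) * μ (Ici t)) * μ univ := by
        gcongr
        exact mul_measure_mul_measure_le_lintegral_compl μ hm₁ hm₂ hdist
    _ ≤ ∫⁻ t in (S₁ ∪ S₂)ᶜ, μ (Iio t) * μ (Ici t) * μ univ := lintegral_mul_const_le _ _
    _ ≤ ∫⁻ t in (S₁ ∪ S₂)ᶜ, ENNReal.ofReal (f t) * E :=
        lintegral_mono fun t ↦ hf.densityMeasure_Iio_mul_Ici_mul_univ_le hfm t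
    _ = E * μ (S₁ ∪ S₂)ᶜ := by
        rw [lintegral_mul_const'' _ hfm.ennreal_ofReal.restrict, mul_comm, hμ,
          withDensity_apply _ (hm₁.union hm₂).compl]

end LogConcave

theorem lintegral_edist_le_sqrt_two_mul_variance {Ω : Type*} [MeasurableSpace Ω] {μ : Measure Ω}
    [IsProbabilityMeasure μ] {X : Ω → ℝ} (hX : MemLp X 2 μ) :
    ∫⁻ p, edist (X p.1) (X p.2) ∂μ.prod μ ≤ ENNReal.ofReal √(2 * Var[X; μ]) := by
  set D : Ω × Ω → ℝ := fun p ↦ X p.1 - X p.2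
  have hD : MemLp D 2 (μ.prod μ) := (hX.comp_fst μ).sub (hX.comp_snd μ)
  have hmean : ∫ p, D p ∂μ.prod μ = 0 := by
    have hX₁ := hX.integrable one_le_two
    rw [integral_sub (hX₁.comp_fst μ) (hX₁.comp_snd μ), integral_fun_fst, integral_fun_snd,
      sub_self]
  have hvar : ∫ p, D p ^ 2 ∂μ.prod μ = 2 * Var[X; μ] := by
    rw [← variance_of_integral_eq_zero hD.aemeasurable hmean, two_mul]
    simpa only [variance_neg, Pi.neg_apply, ← sub_eq_add_neg] using variance_add_prod hX hX.neg
  have habs : (∫ p, |D p| ∂μ.prod μ) ^ 2 ≤ ∫ p, D p ^ 2 ∂μ.prod μ := by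
    have h := variance_eq_sub hD.abs ▸ variance_nonneg |D| (μ.prod μ)
    simpa [sub_nonneg] using h
  calc ∫⁻ p, edist (X p.1) (X p.2) ∂μ.prod μ
      = ENNReal.ofReal (∫ p, |D p| ∂μ.prod μ) := by
        simp_rw [ofReal_integral_eq_lintegral_ofReal (hD.integrable one_le_two).abs
          (.of_forall fun p ↦ abs_nonneg (D p)), edist_dist, Real.dist_eq, D]
    _ ≤ ENNReal.ofReal √(2 * Var[X; μ]) :=
        ENNReal.ofReal_le_ofReal (Real.le_sqrt_of_sq_le (habs.trans_eq hvar))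

theorem variance_le_integral_sub_sq {Ω : Type*} [MeasurableSpace Ω] {μ : Measure Ω}
    [IsProbabilityMeasure μ] {X : Ω → ℝ} (hX : AEStronglyMeasurable X μ) (c : ℝ) :
    Var[X; μ] ≤ ∫ ω, (X ω - c) ^ 2 ∂μ := by
  rw [← variance_sub_const hX c]
  exact variance_le_expectation_sq (hX.sub aestronglyMeasurable_const)

section DensityMeasure

variable {α : Type*} [MeasureSpace α] {f : α → ℝ}

theorem densityMeasure_eq_ofReal_setIntegral (hf0 : 0 ≤ f) (hf : Integrable f) {S : Set α}
    (hS : MeasurableSet S) : densityMeasure f S = ENNReal.ofReal (∫ x in S, f x) := by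
  rw [withDensity_apply _ hS,
    ofReal_integral_eq_lintegral_ofReal hf.integrableOn (.of_forall hf0)]

theorem isProbabilityMeasure_densityMeasure (hf0 : 0 ≤ f) (hmass : ∫ x, f x = 1) :
    IsProbabilityMeasure (densityMeasure f) :=
  ⟨by rw [densityMeasure_eq_ofReal_setIntegral hf0 (integrable_of_integral_eq_one hmass) .univ,
    setIntegral_univ, hmass, ENNReal.ofReal_one]⟩

theorem integral_densityMeasure (hf0 : 0 ≤ f) (hfm : AEMeasurable f) (g : α → ℝ) :
    ∫ x, g x ∂densityMeasure f = ∫ x, g x * f x := by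
  rw [integral_withDensity_eq_integral_toReal_smul₀ hfm.ennreal_ofReal (by simp)]
  simp only [ENNReal.toReal_ofReal (hf0 _), smul_eq_mul, mul_comm]

theorem integrable_densityMeasure_iff (hf0 : 0 ≤ f) (hfm : AEMeasurable f) {g : α → ℝ} :
    Integrable g (densityMeasure f) ↔ Integrable fun x ↦ g x * f x := by
  rw [integrable_withDensity_iff_integrable_smul₀' hfm.ennreal_ofReal (by simp)]
  simp only [ENNReal.toReal_ofReal (hf0 _), smul_eq_mul, mul_comm]

end DensityMeasure

theorem lintegral_edist_densityMeasure_le {f : ℝ → ℝ} (hf0 : 0 ≤ f) (hmass : ∫ x, f x = 1) {c σ : ℝ}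
    (hσ : 0 < σ) (hvar : ∫ x, (x - c) ^ 2 * f x = σ ^ 2) :
    ∫⁻ p, edist p.1 p.2 ∂(densityMeasure f).prod (densityMeasure f) ≤ ENNReal.ofReal (√2 * σ) := by
  have hfm : AEMeasurable f := (integrable_of_integral_eq_one hmass).aemeasurable
  have := isProbabilityMeasure_densityMeasure hf0 hmass
  have hint : Integrable fun x ↦ (x - c) ^ 2 * f x :=
    .of_integral_ne_zero (hvar.trans_ne (by positivity))
  have hsub : MemLp (fun x ↦ x - c) 2 (densityMeasure f) :=
    (memLp_two_iff_integrable_sq (by fun_prop)).2 ((integrable_densityMeasure_iff hf0 hfm).2 hint)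
  have hid : MemLp (fun x ↦ x) 2 (densityMeasure f) := by
    simpa only [Pi.add_def, sub_add_cancel] using hsub.add (memLp_const c)
  have hvar_le : Var[fun x ↦ x; densityMeasure f] ≤ σ ^ 2 := by
    rw [← hvar, ← integral_densityMeasure hf0 hfm]
    exact variance_le_integral_sub_sq hid.1 c
  refine (lintegral_edist_le_sqrt_two_mul_variance hid).trans (ENNReal.ofReal_le_ofReal ?_)
  calc √(2 * Var[fun x ↦ x; densityMeasure f]) ≤ √(2 * σ ^ 2) := by gcongr
    _ = √2 * σ := by rw [sqrt_mul zero_le_two, sqrt_sq hσ.le]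

theorem one_dim_isoperimetry_general {f : ℝ → ℝ} (hf : LogConcave f) (hmass : ∫ x, f x = 1)
    {c σ : ℝ} (hσ : 0 < σ) (hvar : ∫ x, (x - c) ^ 2 * f x = σ ^ 2) {S₁ S₂ : Set ℝ}
    (hm₁ : MeasurableSet S₁) (hm₂ : MeasurableSet S₂) {d : ℝ} (hd : 0 ≤ d)
    (hdist : ∀ s ∈ S₁, ∀ t ∈ S₂, d ≤ |s - t|) :
    d * (∫ x in S₁, f x) * (∫ x in S₂, f x) ≤ √2 * σ * ∫ x in (S₁ ∪ S₂)ᶜ, f x := by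
  have hint := integrable_of_integral_eq_one hmass
  have hmeas {S : Set ℝ} (hS : MeasurableSet S) :
      densityMeasure f S = ENNReal.ofReal (∫ x in S, f x) :=
    densityMeasure_eq_ofReal_setIntegral hf.nonneg hint hS
  have hpos (S : Set ℝ) : 0 ≤ ∫ x in S, f x := integral_nonneg hf.nonneg
  have := isProbabilityMeasure_densityMeasure hf.nonneg hmass
  have hedist : ∀ s ∈ S₁, ∀ t ∈ S₂, ENNReal.ofReal d ≤ edist s t := fun s hs t ht ↦ by
    rw [edist_dist, Real.dist_eq]
    exact ENNReal.ofReal_le_ofReal (hdist s hs t ht)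
  have hiso := (hf.mul_densityMeasure_mul_densityMeasure_mul_univ_le hint.aemeasurable hm₁ hm₂
    hedist).trans (mul_le_mul_left (lintegral_edist_densityMeasure_le hf.nonneg hmass hσ hvar) _)
  rwa [measure_univ, mul_one, hmeas hm₁, hmeas hm₂, hmeas (hm₁.union hm₂).compl,
    ← ENNReal.ofReal_mul (hpos _), ← ENNReal.ofReal_mul hd, ← ENNReal.ofReal_mul (by positivity),
    ENNReal.ofReal_le_ofReal_iff (mul_nonneg (by positivity) (hpos _)), ← mul_assoc] at hiso

theorem log_two_mul_le_of_le_sqrt_two_mul {a b : ℝ} (hb : 0 ≤ b) (hab : a ≤ √2 * b) :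
    log 2 * a ≤ b := by
  have hlog : log 2 < 0.7 := log_two_lt_d9.trans (by norm_num)
  have hsqrt : √2 ≤ 1.42 := (sqrt_le_left (by norm_num)).2 (by norm_num)
  calc log 2 * a ≤ log 2 * (√2 * b) := by gcongr
    _ ≤ 0.7 * (1.42 * b) := by gcongr
    _ ≤ b := by linarith

/-- One-dimensional isoperimetry for isotropic logconcave densities (KLS):
for any isotropic logconcave density `f` on `ℝ` and any measurable partition
`S₁, S₂, S₃` of `ℝ`, `π_f(S₃) ≥ (ln 2) · d(S₁,S₂) · π_f(S₁) · π_f(S₂)`, where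
`d(S₁,S₂)` is the distance between `S₁` and `S₂` (formalized by quantifying over
all lower bounds `d` of the distances `|s - t|`, `s ∈ S₁`, `t ∈ S₂`). -/
theorem one_dim_isoperimetry
    (f : ℝ → ℝ) (hf0 : ∀ x, 0 ≤ f x)
    (hlc : ∀ x y : ℝ, ∀ l ∈ Icc (0:ℝ) 1,
      f x ^ l * f y ^ (1 - l) ≤ f (l * x + (1 - l) * y))
    (hint : Integrable f)
    (hmass : ∫ x, f x = 1)
    (hmean : ∫ x, x * f x = 0)
    (hvar : ∫ x, x ^ 2 * f x = 1)
    (S₁ S₂ S₃ : Set ℝ)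
    (hm₁ : MeasurableSet S₁) (hm₂ : MeasurableSet S₂) (hm₃ : MeasurableSet S₃)
    (hd₁₂ : Disjoint S₁ S₂) (hd₁₃ : Disjoint S₁ S₃) (hd₂₃ : Disjoint S₂ S₃)
    (hcover : S₁ ∪ S₂ ∪ S₃ = univ)
    (d : ℝ) (hd : 0 ≤ d) (hdist : ∀ s ∈ S₁, ∀ t ∈ S₂, d ≤ |s - t|) :
    Real.log 2 * d * (∫ x in S₁, f x) * (∫ x in S₂, f x) ≤ ∫ x in S₃, f x := by
  obtain rfl : S₃ = (S₁ ∪ S₂)ᶜ :=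
    (IsCompl.of_eq (hd₁₃.union_left hd₂₃).inter_eq hcover).compl_eq.symm
  have hiso := one_dim_isoperimetry_general (c := 0) ⟨hf0, hlc⟩ hmass one_pos
    (by simpa using hvar) hm₁ hm₂ hd hdist
  rw [mul_one, mul_assoc] at hiso
  rw [mul_assoc, mul_assoc]
  exact log_two_mul_le_of_le_sqrt_two_mul (integral_nonneg hf0) hiso
end

section
/- Let σ > 0 and let K ⊆ ℝⁿ be a convex body with B_n ⊆ K ⊆ 4σ√n B_n, where B_n is the unit ball. Let 0 < δ ≤ σ/(8√n), let f(x) = e^{−‖x‖²/(2σ²)}, and for x ∈ K define the local conductance ℓ(x) = vol(K ∩ (x + δB_n))/vol(δB_n), and for a measurable set S define P_x(S) = (1/vol(K ∩ (x + δB_n))) ∫_{S ∩ K ∩ (x + δB_n)} min(1, f(y)/f(x)) dy. Then for any partition of K into measurable sets S and K∖S, and any u ∈ S, v ∈ K∖S with ‖u − v‖ < δ/√n, one has P_u(K∖S) + P_v(S) ≥ (1/(e(e+1))) · min{ℓ(u), ℓ(v)}. -/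
open MeasureTheory Real Set Metric

/-!
Let `X` and `Y` be the two crescents `K ∩ B(u, δ) \ B(v, δ)` and `K ∩ B(v, δ) \ B(u, δ)`. By the
parallelogram law, every midpoint of a point of `X` and a point of `Y` lies within
`√(δ² + |u - v|²)` of both `u` and `v`, so the Brunn–Minkowski inequality in its multiplicative
form `μ X ^ (1/2) * μ Y ^ (1/2) ≤ μ (X / 2 + Y / 2)`, a consequence of Prékopa–Leindler, bounds the
smaller crescent by this slightly larger lens. As `|u - v| ≤ δ / √n`, shrinking the larger lens
towards the midpoint of `u` and `v` by the factor `1 + 3 / (2n)` maps it into the lens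
`K ∩ B(u, δ) ∩ B(v, δ)`, at the cost of a factor `e^(3/2)` in volume. Hence the lens carries at
least the fraction `1 / (e^(3/2) + 1)` of the smaller of `K ∩ B(u, δ)` and `K ∩ B(v, δ)`. Each of
its points lies in `K \ S`, reachable from `u`, or in `S`, reachable from `v`, and since
`δ · 4σ√n ≤ σ² / 2` the Metropolis filter accepts the move with probability at least `e^(-1/2)`.
-/

open scoped ENNReal Pointwise

section BrunnMinkowskiReal

variable {A B : Set ℝ}

-- With `p = max A` and `q = min B`, the translates `q + A` and `p + B` lie in `A + B` and meet
-- only in `p + q`.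
theorem volume_add_volume_le_volume_add_of_isCompact (hA : IsCompact A) (hB : IsCompact B)
    (hA₀ : A.Nonempty) (hB₀ : B.Nonempty) : volume A + volume B ≤ volume (A + B) := by
  obtain ⟨p, hpA, hp⟩ := hA.exists_isGreatest hA₀
  obtain ⟨q, hqB, hq⟩ := hB.exists_isLeast hB₀
  have hdisj : AEDisjoint volume (q +ᵥ A) (p +ᵥ B) := by
    refine measure_mono_null (t := {p + q}) ?_ (by simp)
    rintro _ ⟨⟨x, hx, rfl⟩, ⟨y, hy, hxy⟩⟩
    have hxp : x ≤ p := hp hx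
    have hqy : q ≤ y := hq hy
    simp only [vadd_eq_add, mem_singleton_iff] at hxy ⊢
    linarith
  have hsub : (q +ᵥ A) ∪ (p +ᵥ B) ⊆ A + B := by
    rintro _ (⟨x, hx, rfl⟩ | ⟨y, hy, rfl⟩)
    · exact ⟨x, hx, q, hqB, add_comm x q⟩
    · exact ⟨p, hpA, y, hy, rfl⟩
  calc volume A + volume B = volume ((q +ᵥ A) ∪ (p +ᵥ B)) := by
        rw [measure_union₀ (hB.vadd p).measurableSet.nullMeasurableSet hdisj,
          measure_vadd, measure_vadd]
    _ ≤ volume (A + B) := measure_mono hsub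

theorem volume_add_volume_le_volume_add (hA : MeasurableSet A) (hB : MeasurableSet B)
    (hA₀ : A.Nonempty) (hB₀ : B.Nonempty) : volume A + volume B ≤ volume (A + B) := by
  obtain ⟨a, ha⟩ := hA₀
  obtain ⟨b, hb⟩ := hB₀
  rw [hA.measure_eq_iSup_isCompact, hB.measure_eq_iSup_isCompact]
  simp only [iSup_and']
  refine ENNReal.biSup_add_biSup_le' ⟨∅, by simp⟩ ⟨∅, by simp⟩
    fun A' ⟨hA'A, hA'⟩ B' ⟨hB'B, hB'⟩ => ?_
  calc volume A' + volume B' ≤ volume (insert a A') + volume (insert b B') := by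
        gcongr <;> exact subset_insert _ _
    _ ≤ volume (insert a A' + insert b B') :=
        volume_add_volume_le_volume_add_of_isCompact (hA'.insert a) (hB'.insert b)
          (insert_nonempty _ _) (insert_nonempty _ _)
    _ ≤ volume (A + B) := by
        gcongr
        exacts [insert_subset ha hA'A, insert_subset hb hB'B]

end BrunnMinkowskiReal

theorem lintegral_eq_lintegral_meas_ofReal_lt {α : Type*} [MeasurableSpace α] (μ : Measure α)
    [SFinite μ] {f : α → ℝ≥0∞} (hf : Measurable f) :
    ∫⁻ x, f x ∂μ = ∫⁻ t in Ioi 0, μ {x | ENNReal.ofReal t < f x} := by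
  have hvol (c : ℝ≥0∞) : volume.restrict (Ioi 0) {t | ENNReal.ofReal t < c} = c := by
    have hm : MeasurableSet {t | ENNReal.ofReal t < c} :=
      measurableSet_lt ENNReal.measurable_ofReal measurable_const
    rw [Measure.restrict_apply hm]
    rcases eq_or_ne c ⊤ with rfl | hc
    · simp
    · have : {t | ENNReal.ofReal t < c} ∩ Ioi 0 = Ioo 0 c.toReal := by
        ext t
        simp only [mem_inter_iff, mem_ofPred_eq, mem_Ioi, mem_Ioo, and_comm (b := 0 < t)]
        exact and_congr_right fun ht => ENNReal.ofReal_lt_iff_lt_toReal ht.le hc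
      rw [this, Real.volume_Ioo, sub_zero, ENNReal.ofReal_toReal hc]
  have hs : MeasurableSet {p : α × ℝ | ENNReal.ofReal p.2 < f p.1} :=
    measurableSet_lt (by fun_prop) (by fun_prop)
  calc ∫⁻ x, f x ∂μ = ∫⁻ x, volume.restrict (Ioi 0) {t | ENNReal.ofReal t < f x} ∂μ := by
        simp only [hvol]
    _ = (μ.prod (volume.restrict (Ioi 0))) {p | ENNReal.ofReal p.2 < f p.1} :=
        (Measure.prod_apply hs).symm
    _ = ∫⁻ t in Ioi 0, μ {x | ENNReal.ofReal t < f x} := Measure.prod_apply_symm hs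

theorem rpow_mul_rpow_le_add {a b : ℝ} (ha : 0 < a) (hb : 0 < b) (hab : a + b = 1)
    (x y : ℝ≥0∞) : x ^ a * y ^ b ≤ ENNReal.ofReal a * x + ENNReal.ofReal b * y := by
  have := ENNReal.young_inequality (x ^ a) (y ^ b) (Real.HolderConjugate.inv_inv ha hb hab)
  rwa [ENNReal.rpow_rpow_inv ha.ne', ENNReal.rpow_rpow_inv hb.ne', ENNReal.ofReal_inv_of_pos ha,
    ENNReal.ofReal_inv_of_pos hb, div_eq_mul_inv, div_eq_mul_inv, inv_inv, inv_inv,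
    mul_comm x, mul_comm y] at this

theorem rpow_mul_rpow_self {a b : ℝ} (ha : 0 ≤ a) (hb : 0 ≤ b) (hab : a + b = 1) (c : ℝ≥0∞) :
    c ^ a * c ^ b = c := by
  rw [← ENNReal.rpow_add_of_nonneg a b ha hb, hab, ENNReal.rpow_one]

/-- The **Prékopa–Leindler property** of a measure on a real vector space: the functional form of
the Brunn–Minkowski inequality, for all weights `a, b > 0` with `a + b = 1`. -/
def PrekopaLeindler {E : Type*} [AddCommGroup E] [Module ℝ E] [MeasurableSpace E]
    (μ : Measure E) : Prop :=
  ∀ ⦃a b : ℝ⦄, 0 < a → 0 < b → a + b = 1 → ∀ ⦃f g h : E → ℝ≥0∞⦄,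
    Measurable f → Measurable g → Measurable h →
    (∀ x y, f x ^ a * g y ^ b ≤ h (a • x + b • y)) →
    (∫⁻ x, f x ∂μ) ^ a * (∫⁻ x, g x ∂μ) ^ b ≤ ∫⁻ x, h x ∂μ

section PrekopaLeindlerReal

variable {a b : ℝ} {f g h : ℝ → ℝ≥0∞}

-- Equal suprema make the superlevel sets of `f` and `g` empty for the same thresholds, so that
-- the one-dimensional Brunn–Minkowski inequality applies to all of them.
theorem lintegral_add_lintegral_le_of_iSup_eq (ha : 0 < a) (hb : 0 < b) (hab : a + b = 1)
    (hf : Measurable f) (hg : Measurable g) (hh : Measurable h) (hfg : ⨆ x, f x = ⨆ x, g x)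
    (H : ∀ x y, f x ^ a * g y ^ b ≤ h (a • x + b • y)) :
    ENNReal.ofReal a * (∫⁻ x, f x) + ENNReal.ofReal b * (∫⁻ x, g x) ≤ ∫⁻ x, h x := by
  have hmeas (φ : ℝ → ℝ≥0∞) : Measurable fun t => volume {x | ENNReal.ofReal t < φ x} :=
    Antitone.measurable fun s t hst =>
      measure_mono fun x hx => (ENNReal.ofReal_le_ofReal hst).trans_lt hx
  have hlevel (t : ℝ) : ENNReal.ofReal a * volume {x | ENNReal.ofReal t < f x} +
      ENNReal.ofReal b * volume {x | ENNReal.ofReal t < g x} ≤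
      volume {x | ENNReal.ofReal t < h x} := by
    set s := ENNReal.ofReal t
    rcases lt_or_ge s (⨆ x, f x) with hs | hs
    · have hadd : a • {x | s < f x} + b • {x | s < g x} ⊆ {x | s < h x} := by
        rintro _ ⟨_, ⟨x, hx, rfl⟩, _, ⟨y, hy, rfl⟩, rfl⟩
        calc s = s ^ a * s ^ b := (rpow_mul_rpow_self ha.le hb.le hab s).symm
          _ < f x ^ a * g y ^ b :=
            ENNReal.mul_lt_mul (ENNReal.rpow_lt_rpow hx ha) (ENNReal.rpow_lt_rpow hy hb)
          _ ≤ h (a • x + b • y) := H x y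
      have hsmul {c : ℝ} (hc : 0 < c) (T : Set ℝ) :
          ENNReal.ofReal c * volume T = volume (c • T) := by
        rw [Measure.addHaar_smul, Module.finrank_self, pow_one, abs_of_pos hc]
      rw [hsmul ha, hsmul hb]
      refine (volume_add_volume_le_volume_add ?_ ?_ ?_ ?_).trans (measure_mono hadd)
      · exact (measurableSet_lt measurable_const hf).const_smul₀ a
      · exact (measurableSet_lt measurable_const hg).const_smul₀ b
      · exact Nonempty.smul_set (lt_iSup_iff.1 hs)
      · exact Nonempty.smul_set (lt_iSup_iff.1 (hs.trans_eq hfg))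
    · have hf_empty : {x | s < f x} = ∅ :=
        eq_empty_of_forall_notMem fun x hx => (hs.trans_lt hx).not_ge (le_iSup f x)
      have hg_empty : {x | s < g x} = ∅ :=
        eq_empty_of_forall_notMem fun x hx => ((hfg ▸ hs).trans_lt hx).not_ge (le_iSup g x)
      simp [hf_empty, hg_empty]
  rw [lintegral_eq_lintegral_meas_ofReal_lt volume hf,
    lintegral_eq_lintegral_meas_ofReal_lt volume hg,
    lintegral_eq_lintegral_meas_ofReal_lt volume hh,
    ← lintegral_const_mul _ (hmeas f), ← lintegral_const_mul _ (hmeas g),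
    ← lintegral_add_left ((hmeas f).const_mul _)]
  exact lintegral_mono hlevel

theorem lintegral_rpow_mul_lintegral_rpow_le_of_iSup_ne_top (ha : 0 < a) (hb : 0 < b)
    (hab : a + b = 1) (hf : Measurable f) (hg : Measurable g) (hh : Measurable h)
    (hf_top : ⨆ x, f x ≠ ⊤) (hg_top : ⨆ x, g x ≠ ⊤)
    (H : ∀ x y, f x ^ a * g y ^ b ≤ h (a • x + b • y)) :
    (∫⁻ x, f x) ^ a * (∫⁻ x, g x) ^ b ≤ ∫⁻ x, h x := by
  rcases eq_or_ne (⨆ x, f x) 0 with hf₀ | hf₀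
  · have : f = 0 := funext (ENNReal.iSup_eq_zero.1 hf₀)
    simp [this, ha]
  rcases eq_or_ne (⨆ x, g x) 0 with hg₀ | hg₀
  · have : g = 0 := funext (ENNReal.iSup_eq_zero.1 hg₀)
    simp [this, hb]
  set c := (⨆ x, f x) / ⨆ x, g x
  have hc₀ : c ≠ 0 := (ENNReal.div_pos hf₀ hg_top).ne'
  have hc_top : c ≠ ⊤ := ENNReal.div_ne_top hf_top hg₀
  have hsup : ⨆ x, f x = ⨆ x, c * g x := by
    rw [← ENNReal.mul_iSup, ENNReal.div_mul_cancel hg₀ hg_top]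
  have hH (x y : ℝ) : f x ^ a * (c * g y) ^ b ≤ c ^ b * h (a • x + b • y) := by
    rw [ENNReal.mul_rpow_of_nonneg _ _ hb.le, mul_left_comm]
    gcongr
    exact H x y
  have hcb₀ : c ^ b ≠ 0 := by simp [hc₀, hc_top]
  have hcb_top : c ^ b ≠ ⊤ := ENNReal.rpow_ne_top_of_nonneg hb.le hc_top
  refine (ENNReal.mul_le_mul_iff_right hcb₀ hcb_top).1 ?_
  calc c ^ b * ((∫⁻ x, f x) ^ a * (∫⁻ x, g x) ^ b)
      = (∫⁻ x, f x) ^ a * (∫⁻ x, c * g x) ^ b := by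
        rw [lintegral_const_mul c hg, ENNReal.mul_rpow_of_nonneg _ _ hb.le, mul_left_comm]
    _ ≤ ENNReal.ofReal a * (∫⁻ x, f x) + ENNReal.ofReal b * (∫⁻ x, c * g x) :=
        rpow_mul_rpow_le_add ha hb hab _ _
    _ ≤ ∫⁻ x, c ^ b * h x :=
        lintegral_add_lintegral_le_of_iSup_eq ha hb hab hf (hg.const_mul c) (hh.const_mul _) hsup hH
    _ = c ^ b * ∫⁻ x, h x := lintegral_const_mul _ hh

theorem lintegral_eq_iSup_lintegral_min_natCast {α : Type*} [MeasurableSpace α] (μ : Measure α)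
    {f : α → ℝ≥0∞} (hf : Measurable f) : ∫⁻ x, f x ∂μ = ⨆ k : ℕ, ∫⁻ x, min (f x) k ∂μ := by
  rw [← lintegral_iSup (fun k => hf.min measurable_const)
    fun i j hij x => min_le_min_left _ (Nat.cast_le.2 hij)]
  simp only [← inf_iSup_eq, ENNReal.iSup_natCast, inf_top_eq]

theorem prekopaLeindler_volume_real : PrekopaLeindler (volume : Measure ℝ) := by
  intro a b ha hb hab f g h hf hg hh H
  have hrpow {c : ℝ} (hc : 0 < c) (φ : ℕ → ℝ≥0∞) : (⨆ k, φ k) ^ c = ⨆ k, φ k ^ c :=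
    (ENNReal.orderIsoRpow c hc).map_iSup φ
  have hsup (φ : ℝ → ℝ≥0∞) (k : ℕ) : ⨆ x, min (φ x) k ≠ ⊤ :=
    ne_top_of_le_ne_top (ENNReal.natCast_ne_top k) (iSup_le fun _ => min_le_right _ _)
  rw [lintegral_eq_iSup_lintegral_min_natCast volume hf,
    lintegral_eq_iSup_lintegral_min_natCast volume hg, hrpow ha, hrpow hb]
  simp only [ENNReal.iSup_mul, ENNReal.mul_iSup]
  refine iSup_le fun j => iSup_le fun i => ?_
  refine lintegral_rpow_mul_lintegral_rpow_le_of_iSup_ne_top ha hb hab (hf.min measurable_const)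
    (hg.min measurable_const) hh (hsup f i) (hsup g j) fun x y => ?_
  exact le_trans (by gcongr <;> exact min_le_left _ _) (H x y)

end PrekopaLeindlerReal

namespace PrekopaLeindler

variable {E F : Type*} [AddCommGroup E] [Module ℝ E] [MeasurableSpace E]
  [AddCommGroup F] [Module ℝ F] [MeasurableSpace F] {μ : Measure E} {ν : Measure F}

theorem prod [SFinite ν] (hμ : PrekopaLeindler μ) (hν : PrekopaLeindler ν) :
    PrekopaLeindler (μ.prod ν) := by
  intro a b ha hb hab f g h hf hg hh H
  rw [lintegral_prod _ hf.aemeasurable, lintegral_prod _ hg.aemeasurable,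
    lintegral_prod _ hh.aemeasurable]
  exact hμ ha hb hab hf.lintegral_prod_right' hg.lintegral_prod_right' hh.lintegral_prod_right'
    fun s t => hν ha hb hab (by fun_prop) (by fun_prop) (by fun_prop) fun x y => H (s, x) (t, y)

theorem of_measurePreserving (hμ : PrekopaLeindler μ) (e : E →ₗ[ℝ] F)
    (he : MeasurePreserving e μ ν) : PrekopaLeindler ν := by
  intro a b ha hb hab f g h hf hg hh H
  rw [← he.lintegral_comp hf, ← he.lintegral_comp hg, ← he.lintegral_comp hh]
  exact hμ ha hb hab (hf.comp he.measurable) (hg.comp he.measurable) (hh.comp he.measurable)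
    fun x y => by simpa only [map_add, map_smul] using H (e x) (e y)

theorem smul (hμ : PrekopaLeindler μ) (c : ℝ≥0∞) : PrekopaLeindler (c • μ) := by
  intro a b ha hb hab f g h hf hg hh H
  simp only [lintegral_smul_measure, smul_eq_mul, ENNReal.mul_rpow_of_nonneg _ _ ha.le,
    ENNReal.mul_rpow_of_nonneg _ _ hb.le, mul_mul_mul_comm, rpow_mul_rpow_self ha.le hb.le hab]
  gcongr
  exact hμ ha hb hab hf hg hh H

end PrekopaLeindler

theorem prekopaLeindler_volume_fin_fun (n : ℕ) :
    PrekopaLeindler (volume : Measure (Fin n → ℝ)) := by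
  induction n with
  | zero =>
    intro a b _ _ _ f g h _ _ _ H
    simpa [Measure.volume_pi_eq_dirac 0] using H 0 0
  | succ n ih =>
    let e : (ℝ × (Fin n → ℝ)) ≃ₗ[ℝ] (Fin (n + 1) → ℝ) := Fin.consLinearEquiv ℝ fun _ => ℝ
    have he : MeasurePreserving e := by
      convert (volume_preserving_piFinSuccAbove (fun _ : Fin (n + 1) => ℝ) 0).symm using 1
      ext p
      simp [e]
    exact (prekopaLeindler_volume_real.prod ih).of_measurePreserving e.toLinearMap he

section BrunnMinkowski

variable {E : Type*} [NormedAddCommGroup E] [NormedSpace ℝ E] [FiniteDimensional ℝ E]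
  [MeasurableSpace E] [BorelSpace E] (μ : Measure E) [μ.IsAddHaarMeasure]

theorem prekopaLeindler_of_isAddHaarMeasure : PrekopaLeindler μ := by
  let e : E ≃L[ℝ] (Fin (Module.finrank ℝ E) → ℝ) := (Module.finBasis ℝ E).equivFunL
  have := e.isAddHaarMeasure_map μ
  have hmap : PrekopaLeindler (μ.map e) := by
    rw [Measure.isAddLeftInvariant_eq_smul (μ.map e) volume]
    exact (prekopaLeindler_volume_fin_fun _).smul _
  refine hmap.of_measurePreserving (e.symm : _ →ₗ[ℝ] E) ?_
  exact MeasurePreserving.symm e.toHomeomorph.toMeasurableEquiv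
    (e.continuous.measurable.measurePreserving μ)

theorem measure_rpow_mul_measure_rpow_le {X Y : Set E} {a b : ℝ} (hX : NullMeasurableSet X μ)
    (hY : NullMeasurableSet Y μ) (ha : 0 < a) (hb : 0 < b) (hab : a + b = 1) :
    μ X ^ a * μ Y ^ b ≤ μ (a • X + b • Y) := by
  obtain ⟨X', hX'X, hX', hX'_eq⟩ := hX.exists_measurable_subset_ae_eq
  obtain ⟨Y', hY'Y, hY', hY'_eq⟩ := hY.exists_measurable_subset_ae_eq
  set Z := toMeasurable μ (a • X + b • Y)
  have hZ : MeasurableSet Z := measurableSet_toMeasurable _ _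
  have H (x y : E) : X'.indicator (1 : E → ℝ≥0∞) x ^ a * Y'.indicator (1 : E → ℝ≥0∞) y ^ b ≤
      Z.indicator 1 (a • x + b • y) := by
    by_cases hx : x ∈ X'
    · by_cases hy : y ∈ Y'
      · have hxy : a • x + b • y ∈ Z := subset_toMeasurable _ _
          (add_mem_add (smul_mem_smul_set (hX'X hx)) (smul_mem_smul_set (hY'Y hy)))
        simp [hx, hy, hxy]
      · simp [hy, hb]
    · simp [hx, ha]
  have := prekopaLeindler_of_isAddHaarMeasure μ ha hb hab (measurable_one.indicator hX')
    (measurable_one.indicator hY') (measurable_one.indicator hZ) H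
  rwa [lintegral_indicator_one hX', lintegral_indicator_one hY', lintegral_indicator_one hZ,
    measure_congr hX'_eq, measure_congr hY'_eq, measure_toMeasurable] at this

end BrunnMinkowski

/-- The part of `K` within distance `r` of both `u` and `v`. For `r = δ` it is the region that the
walk with step size `δ` can reach in one step from either point. -/
def lens {E : Type*} [PseudoMetricSpace E] (K : Set E) (u v : E) (r : ℝ) : Set E :=
  K ∩ closedBall u r ∩ closedBall v r

theorem lens_comm {E : Type*} [PseudoMetricSpace E] (K : Set E) (u v : E) (r : ℝ) :
    lens K u v r = lens K v u r :=
  inter_right_comm _ _ _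

theorem measureReal_lens_le_add {E : Type*} [PseudoMetricSpace E] [ProperSpace E]
    [MeasurableSpace E] (μ : Measure E) [IsFiniteMeasureOnCompacts μ] {K S : Set E} {u v : E}
    {r : ℝ} (hS : NullMeasurableSet S μ) :
    μ.real (lens K u v r) ≤
      μ.real ((K \ S) ∩ K ∩ closedBall u r) + μ.real (S ∩ K ∩ closedBall v r) := by
  have hfin (T : Set E) (w : E) : μ (T ∩ closedBall w r) ≠ ⊤ :=
    measure_ne_top_of_subset inter_subset_right measure_closedBall_lt_top.ne
  calc μ.real (lens K u v r) = μ.real (lens K u v r \ S) + μ.real (lens K u v r ∩ S) := by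
        rw [add_comm]
        exact (measureReal_inter_add_sdiff₀ hS (hfin _ v)).symm
    _ ≤ μ.real ((K \ S) ∩ K ∩ closedBall u r) + μ.real (S ∩ K ∩ closedBall v r) :=
        add_le_add
          (measureReal_mono (fun y hy => ⟨⟨⟨hy.1.1.1, hy.2⟩, hy.1.1.1⟩, hy.1.1.2⟩) (hfin _ u))
          (measureReal_mono (fun y hy => ⟨⟨hy.2, hy.1.1.1⟩, hy.1.2⟩) (hfin _ v))

theorem dist_lineMap_sq_le {E : Type*} [SeminormedAddCommGroup E] [NormedSpace ℝ E] (x y z : E)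
    {t : ℝ} (ht₀ : 0 ≤ t) (ht₁ : t ≤ 1) :
    dist (AffineMap.lineMap x y t) z ^ 2 ≤ (1 - t) * dist x z ^ 2 + t * dist y z ^ 2 := by
  have hconv := (convexOn_univ_norm (E := E)).pow (fun _ _ => norm_nonneg _) 2
  have := hconv.2 (mem_univ (x - z)) (mem_univ (y - z)) (sub_nonneg.2 ht₁) ht₀ (by ring)
  have hsub : AffineMap.lineMap x y t - z = (1 - t) • (x - z) + t • (y - z) := by
    rw [AffineMap.lineMap_apply_module]
    module
  simpa [dist_eq_norm, hsub] using this

section NormedSpace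

variable {E : Type*} [NormedAddCommGroup E] [NormedSpace ℝ E] {K : Set E} {u v : E} {δ : ℝ}

theorem homothety_image_lens_subset_lens (hK : Convex ℝ K) (hu : u ∈ K) (hv : v ∈ K)
    {s : ℝ} (hs : 0 ≤ s) (hδ : 0 ≤ δ) (hsδ : (4 + s) * dist u v ^ 2 ≤ 4 * s * δ ^ 2) :
    AffineMap.homothety (midpoint ℝ u v) (1 + s)⁻¹ '' lens K u v √(δ ^ 2 + dist u v ^ 2) ⊆
      lens K u v δ := by
  have ht₀ : 0 ≤ (1 + s)⁻¹ := by positivity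
  have ht₁ : (1 + s)⁻¹ ≤ 1 := inv_le_one_of_one_le₀ (by linarith)
  have hcenter {z w : E} (hw : dist (midpoint ℝ u v) w = 2⁻¹ * dist u v)
      (hz : z ∈ closedBall w √(δ ^ 2 + dist u v ^ 2)) :
      AffineMap.lineMap (midpoint ℝ u v) z (1 + s)⁻¹ ∈ closedBall w δ := by
    have hz' : dist z w ^ 2 ≤ δ ^ 2 + dist u v ^ 2 :=
      (Real.le_sqrt dist_nonneg (by positivity)).1 hz
    refine (sq_le_sq₀ dist_nonneg hδ).1 ?_
    calc dist (AffineMap.lineMap (midpoint ℝ u v) z (1 + s)⁻¹) w ^ 2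
        ≤ (1 - (1 + s)⁻¹) * dist (midpoint ℝ u v) w ^ 2 + (1 + s)⁻¹ * dist z w ^ 2 :=
          dist_lineMap_sq_le _ _ _ ht₀ ht₁
      _ ≤ (1 - (1 + s)⁻¹) * (2⁻¹ * dist u v) ^ 2 + (1 + s)⁻¹ * (δ ^ 2 + dist u v ^ 2) := by
          rw [hw]
          gcongr
      _ = (1 + s)⁻¹ * (((4 + s) * dist u v ^ 2) / 4 + δ ^ 2) := by
          field_simp
          ring
      _ ≤ (1 + s)⁻¹ * (4 * s * δ ^ 2 / 4 + δ ^ 2) := by gcongr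
      _ = δ ^ 2 := by
          field_simp
          ring
  rintro _ ⟨z, ⟨⟨hzK, hzu⟩, hzv⟩, rfl⟩
  rw [AffineMap.homothety_eq_lineMap]
  refine ⟨⟨hK.lineMap_mem (hK.midpoint_mem hu hv) hzK ⟨ht₀, ht₁⟩, hcenter ?_ hzu⟩, hcenter ?_ hzv⟩
  · rw [dist_midpoint_left, Real.norm_ofNat]
  · rw [dist_midpoint_right, Real.norm_ofNat]

variable [FiniteDimensional ℝ E] [MeasurableSpace E] [BorelSpace E]

theorem measure_lens_sqrt_le (μ : Measure E) [μ.IsAddHaarMeasure] (hK : Convex ℝ K) (hu : u ∈ K)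
    (hv : v ∈ K) {s : ℝ} (hs : 0 ≤ s) (hδ : 0 ≤ δ)
    (hsδ : (4 + s) * dist u v ^ 2 ≤ 4 * s * δ ^ 2) :
    μ (lens K u v √(δ ^ 2 + dist u v ^ 2)) ≤
      ENNReal.ofReal ((1 + s) ^ Module.finrank ℝ E) * μ (lens K u v δ) := by
  have hpos : 0 < (1 + s) ^ Module.finrank ℝ E := by positivity
  have := measure_mono (μ := μ) (homothety_image_lens_subset_lens hK hu hv hs hδ hsδ)
  rwa [Measure.addHaar_image_homothety, inv_pow, abs_of_pos (inv_pos.2 hpos),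
    ENNReal.ofReal_inv_of_pos hpos,
    ENNReal.inv_mul_le_iff (ENNReal.ofReal_pos.2 hpos).ne' ENNReal.ofReal_ne_top] at this

theorem measure_lens_sqrt_le_exp (μ : Measure E) [μ.IsAddHaarMeasure] (hK : Convex ℝ K)
    (hu : u ∈ K) (hv : v ∈ K) (hδ : 0 ≤ δ) (huv : dist u v ≤ δ / √(Module.finrank ℝ E)) :
    μ (lens K u v √(δ ^ 2 + dist u v ^ 2)) ≤ ENNReal.ofReal (exp (3 / 2)) * μ (lens K u v δ) := by
  set n := Module.finrank ℝ E
  -- Any `s` of order `1 / n` keeps `(1 + s) ^ n` bounded; the next step needs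
  -- `(4 + s) / n ≤ 4 * s`.
  set s : ℝ := 3 / (2 * n) with hs
  have hsδ : (4 + s) * dist u v ^ 2 ≤ 4 * s * δ ^ 2 := by
    rcases Nat.eq_zero_or_pos n with hn | hn
    · simp_all
    · have hn' : (1 : ℝ) ≤ n := Nat.one_le_cast.2 hn
      have hs_le : s ≤ 2 := by
        rw [hs, div_le_iff₀ (by positivity)]
        linarith
      calc (4 + s) * dist u v ^ 2 ≤ 6 * (δ / √n) ^ 2 := by
            gcongr
            linarith
        _ = 4 * s * δ ^ 2 := by
            rw [div_pow, Real.sq_sqrt n.cast_nonneg, hs]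
            field_simp
            ring
  have hexp : (1 + s) ^ n ≤ exp (3 / 2) := by
    rcases Nat.eq_zero_or_pos n with hn | hn
    · rw [hn, pow_zero]
      exact one_le_exp (by norm_num)
    · calc (1 + s) ^ n ≤ exp s ^ n := by
            gcongr
            linarith [add_one_le_exp s]
        _ = exp (3 / 2) := by
            rw [← exp_nat_mul, hs]
            field_simp
  refine (measure_lens_sqrt_le μ hK hu hv (by positivity) hδ hsδ).trans ?_
  gcongr

end NormedSpace

section InnerProductSpace

variable {E : Type*} [NormedAddCommGroup E] [InnerProductSpace ℝ E] {K : Set E} {u v : E} {δ : ℝ}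

theorem dist_midpoint_sq_le {x y : E} (hxu : dist x u ≤ δ) (hxv : δ ≤ dist x v)
    (hyv : dist y v ≤ δ) : dist (midpoint ℝ x y) u ^ 2 ≤ δ ^ 2 + dist u v ^ 2 := by
  have hδ : 0 ≤ δ := dist_nonneg.trans hxu
  rw [dist_eq_norm] at hxu hxv hyv
  rw [dist_comm u v, dist_eq_norm, dist_eq_norm]
  have hp : ‖x - u‖ ^ 2 ≤ δ ^ 2 := by gcongr
  have hq : ‖y - v‖ ^ 2 ≤ δ ^ 2 := by gcongr
  have hpc : δ ^ 2 ≤ ‖(x - u) - (v - u)‖ ^ 2 := by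
    rw [sub_sub_sub_cancel_right]
    gcongr
  have hpar := parallelogram_law_with_norm ℝ (x - u) (v - u)
  have hpar' := parallelogram_law_with_norm ℝ (y - v) ((x - u) + (v - u))
  have hmid : midpoint ℝ x y - u = (2⁻¹ : ℝ) • ((y - v) + ((x - u) + (v - u))) := by
    rw [midpoint_eq_smul_add, invOf_eq_inv]
    module
  rw [hmid, norm_smul, mul_pow, norm_inv, Real.norm_ofNat]
  linarith [sq_nonneg ‖(y - v) - ((x - u) + (v - u))‖]

theorem smul_add_smul_diff_closedBall_subset_lens (hK : Convex ℝ K) :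
    (1 / 2 : ℝ) • ((K ∩ closedBall u δ) \ closedBall v δ) +
      (1 / 2 : ℝ) • ((K ∩ closedBall v δ) \ closedBall u δ) ⊆
      lens K u v √(δ ^ 2 + dist u v ^ 2) := by
  rintro _ ⟨_, ⟨x, ⟨⟨hxK, hxu⟩, hxv⟩, rfl⟩, _, ⟨y, ⟨⟨hyK, hyv⟩, hyu⟩, rfl⟩, rfl⟩
  have hmid : (1 / 2 : ℝ) • x + (1 / 2 : ℝ) • y = midpoint ℝ x y := by
    rw [midpoint_eq_smul_add, invOf_eq_inv, smul_add, one_div]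
  simp only [mem_closedBall, not_le] at hxu hxv hyv hyu
  simp only [hmid]
  refine ⟨⟨hK.midpoint_mem hxK hyK, ?_⟩, ?_⟩
  · exact Real.le_sqrt_of_sq_le (dist_midpoint_sq_le hxu hxv.le hyv)
  · rw [midpoint_comm, dist_comm u v]
    exact Real.le_sqrt_of_sq_le (dist_midpoint_sq_le hyv hyu.le hxu)

variable [FiniteDimensional ℝ E] [MeasurableSpace E] [BorelSpace E]

theorem min_measure_closedBall_le (μ : Measure E) [μ.IsAddHaarMeasure] (hK : Convex ℝ K)
    (hu : u ∈ K) (hv : v ∈ K) (hδ : 0 ≤ δ) (huv : dist u v ≤ δ / √(Module.finrank ℝ E)) :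
    min (μ (K ∩ closedBall u δ)) (μ (K ∩ closedBall v δ)) ≤
      ENNReal.ofReal (exp (3 / 2) + 1) * μ (lens K u v δ) := by
  set X := (K ∩ closedBall u δ) \ closedBall v δ
  set Y := (K ∩ closedBall v δ) \ closedBall u δ
  have hball (w : E) : NullMeasurableSet (closedBall w δ) μ :=
    measurableSet_closedBall.nullMeasurableSet
  have hKμ : NullMeasurableSet K μ := hK.nullMeasurableSet μ
  have hX : NullMeasurableSet X μ := (hKμ.inter (hball u)).diff (hball v)
  have hY : NullMeasurableSet Y μ := (hKμ.inter (hball v)).diff (hball u)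
  have hmin : min (μ X) (μ Y) ≤ ENNReal.ofReal (exp (3 / 2)) * μ (lens K u v δ) :=
    calc min (μ X) (μ Y) = min (μ X) (μ Y) ^ (1 / 2 : ℝ) * min (μ X) (μ Y) ^ (1 / 2 : ℝ) :=
          (rpow_mul_rpow_self (by norm_num) (by norm_num) (by norm_num) _).symm
      _ ≤ μ X ^ (1 / 2 : ℝ) * μ Y ^ (1 / 2 : ℝ) := by
          gcongr
          exacts [min_le_left _ _, min_le_right _ _]
      _ ≤ μ ((1 / 2 : ℝ) • X + (1 / 2 : ℝ) • Y) :=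
          measure_rpow_mul_measure_rpow_le μ hX hY (by norm_num) (by norm_num) (by norm_num)
      _ ≤ μ (lens K u v √(δ ^ 2 + dist u v ^ 2)) :=
          measure_mono (smul_add_smul_diff_closedBall_subset_lens hK)
      _ ≤ _ := measure_lens_sqrt_le_exp μ hK hu hv hδ huv
  have hXu : μ (K ∩ closedBall u δ) = μ (lens K u v δ) + μ X :=
    (measure_inter_add_sdiff₀ _ (hball v)).symm
  have hYv : μ (K ∩ closedBall v δ) = μ (lens K u v δ) + μ Y := by
    rw [lens_comm]
    exact (measure_inter_add_sdiff₀ _ (hball u)).symm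
  rw [hXu, hYv, min_add_add_left, ENNReal.ofReal_add (exp_nonneg _) zero_le_one,
    ENNReal.ofReal_one, add_mul, one_mul, add_comm]
  gcongr

theorem min_measureReal_closedBall_le (μ : Measure E) [μ.IsAddHaarMeasure] (hK : Convex ℝ K)
    (hu : u ∈ K) (hv : v ∈ K) (hδ : 0 ≤ δ) (huv : dist u v ≤ δ / √(Module.finrank ℝ E)) :
    min (μ.real (K ∩ closedBall u δ)) (μ.real (K ∩ closedBall v δ)) ≤
      (exp (3 / 2) + 1) * μ.real (lens K u v δ) := by
  have hfin (w : E) : μ (K ∩ closedBall w δ) ≠ ⊤ :=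
    measure_ne_top_of_subset inter_subset_right measure_closedBall_lt_top.ne
  have hlens : μ (lens K u v δ) ≠ ⊤ := measure_ne_top_of_subset inter_subset_left (hfin u)
  have := ENNReal.toReal_mono (ENNReal.mul_ne_top ENNReal.ofReal_ne_top hlens)
    (min_measure_closedBall_le μ hK hu hv hδ huv)
  rwa [ENNReal.toReal_min (hfin u) (hfin v), ENNReal.toReal_mul,
    ENNReal.toReal_ofReal (by positivity)] at this

end InnerProductSpace

theorem exp_neg_le_gaussian_div_gaussian {E : Type*} [SeminormedAddCommGroup E] {x y : E}
    {r R : ℝ} (σ : ℝ) (hx : ‖x‖ ≤ R) (hy : ‖y‖ ≤ R) (hxy : dist y x ≤ r) :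
    exp (-(r * R / σ ^ 2)) ≤ exp (-‖y‖ ^ 2 / (2 * σ ^ 2)) / exp (-‖x‖ ^ 2 / (2 * σ ^ 2)) := by
  have hsub : ‖y‖ - ‖x‖ ≤ r := (norm_sub_norm_le y x).trans (dist_eq_norm y x ▸ hxy)
  have hsq : ‖y‖ ^ 2 - ‖x‖ ^ 2 ≤ r * (2 * R) :=
    calc ‖y‖ ^ 2 - ‖x‖ ^ 2 = (‖y‖ - ‖x‖) * (‖y‖ + ‖x‖) := by ring
      _ ≤ r * (2 * R) := by
        gcongr
        · exact dist_nonneg.trans hxy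
        · linarith
  rw [← exp_sub, exp_le_exp, ← sub_div, ← neg_div]
  calc -(r * R) / σ ^ 2 = -(r * (2 * R)) / (2 * σ ^ 2) := by
        rw [show -(r * (2 * R)) = 2 * -(r * R) by ring, mul_div_mul_left _ _ two_ne_zero]
    _ ≤ (-‖y‖ ^ 2 - -‖x‖ ^ 2) / (2 * σ ^ 2) := by
        gcongr
        linarith

theorem measure_inter_closedBall_pos {E : Type*} [NormedAddCommGroup E] [NormedSpace ℝ E]
    [MeasurableSpace E] (μ : Measure E) [μ.IsOpenPosMeasure] {K : Set E} {x : E} {δ : ℝ}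
    (hK : Convex ℝ K) (hKint : (interior K).Nonempty) (hx : x ∈ K) (hδ : 0 < δ) :
    0 < μ (K ∩ closedBall x δ) := by
  have hx' : x ∈ closure (interior K) := by
    rw [hK.closure_interior_eq_closure_of_nonempty_interior hKint]
    exact subset_closure hx
  have hne : (ball x δ ∩ interior K).Nonempty :=
    mem_closure_iff.1 hx' _ isOpen_ball (mem_ball_self hδ)
  calc 0 < μ (ball x δ ∩ interior K) := (isOpen_ball.inter isOpen_interior).measure_pos μ hne
    _ ≤ μ (K ∩ closedBall x δ) :=
      measure_mono fun _ hy => ⟨interior_subset hy.2, ball_subset_closedBall hy.1⟩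

/-- The local conductance `ℓ(x)`: the fraction of the ball of radius `δ` around `x` that lies in
`K`. -/
noncomputable def localConductance {E : Type*} [SeminormedAddCommGroup E] [MeasureSpace E]
    (K : Set E) (δ : ℝ) (x : E) : ℝ :=
  volume.real (K ∩ closedBall x δ) / volume.real (closedBall (0 : E) δ)

/-- The one-step transition probability `P_x(S)`, for `x ∉ S`, of the speedy walk on `K` with step
size `δ` and Metropolis filter for the density `f`. -/
noncomputable def speedyTransition {E : Type*} [PseudoMetricSpace E] [MeasureSpace E]
    (f : E → ℝ) (K : Set E) (δ : ℝ) (x : E) (S : Set E) : ℝ :=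
  (∫ y in S ∩ K ∩ closedBall x δ, min 1 (f y / f x)) / volume.real (K ∩ closedBall x δ)

theorem le_speedyTransition {E : Type*} [NormedAddCommGroup E] [NormedSpace ℝ E]
    [FiniteDimensional ℝ E] [MeasureSpace E] [BorelSpace E]
    [(volume : Measure E).IsAddHaarMeasure] {f : E → ℝ} {K S : Set E} {x : E} {c δ : ℝ}
    (hf : AEMeasurable f) (hK : Convex ℝ K) (hKint : (interior K).Nonempty) (hx : x ∈ K)
    (hδ : 0 < δ) (hS : NullMeasurableSet S) (hc : 0 ≤ c)
    (hcf : ∀ y ∈ K ∩ closedBall x δ, c ≤ min 1 (f y / f x)) :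
    c * volume.real (S ∩ K ∩ closedBall x δ) / volume.real (closedBall (0 : E) δ) ≤
      speedyTransition f K δ x S := by
  have hmeas : NullMeasurableSet (S ∩ K ∩ closedBall x δ) :=
    (hS.inter (hK.nullMeasurableSet volume)).inter measurableSet_closedBall.nullMeasurableSet
  have hfin : volume (S ∩ K ∩ closedBall x δ) ≠ ⊤ :=
    measure_ne_top_of_subset inter_subset_right measure_closedBall_lt_top.ne
  have hcf' : ∀ y ∈ S ∩ K ∩ closedBall x δ, c ≤ min 1 (f y / f x) :=
    fun y hy => hcf y ⟨hy.1.2, hy.2⟩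
  have hint : IntegrableOn (fun y => min 1 (f y / f x)) (S ∩ K ∩ closedBall x δ) := by
    refine Measure.integrableOn_of_bounded (M := 1) hfin
      (aemeasurable_const.min (hf.div_const _)).aestronglyMeasurable ?_
    refine (ae_restrict_iff'₀ hmeas).2 (ae_of_all _ fun y hy => ?_)
    rw [Real.norm_of_nonneg (hc.trans (hcf' y hy))]
    exact min_le_left _ _
  have hpos : 0 < volume.real (K ∩ closedBall x δ) :=
    ENNReal.toReal_pos (measure_inter_closedBall_pos volume hK hKint hx hδ).ne'
      (measure_ne_top_of_subset inter_subset_right measure_closedBall_lt_top.ne)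
  have hball : volume.real (K ∩ closedBall x δ) ≤ volume.real (closedBall (0 : E) δ) := by
    rw [← Measure.addHaar_real_closedBall_center volume x δ]
    exact measureReal_mono inter_subset_right measure_closedBall_lt_top.ne
  have hlow : c * volume.real (S ∩ K ∩ closedBall x δ) ≤
      ∫ y in S ∩ K ∩ closedBall x δ, min 1 (f y / f x) := by
    have := setIntegral_mono_on₀ (integrableOn_const hfin) hint hmeas hcf'
    rwa [setIntegral_const, smul_eq_mul, mul_comm] at this
  exact div_le_div₀ ((by positivity : (0 : ℝ) ≤ _).trans hlow) hlow hpos hball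

theorem one_div_exp_one_mul_le :
    1 / (exp 1 * (exp 1 + 1)) ≤ exp (-(1 / 2)) / (exp (3 / 2) + 1) := by
  rw [div_le_div_iff₀ (by positivity) (by positivity)]
  calc 1 * (exp (3 / 2) + 1) ≤ exp (3 / 2) + exp (1 / 2) := by
        linarith [one_le_exp (show (0 : ℝ) ≤ 1 / 2 by norm_num)]
    _ = exp (-(1 / 2)) * (exp 1 * (exp 1 + 1)) := by
        rw [mul_add, mul_add, mul_one, ← exp_add, ← exp_add, ← exp_add]
        norm_num

section SpeedyWalk

variable {E : Type*} [NormedAddCommGroup E] [InnerProductSpace ℝ E] [FiniteDimensional ℝ E]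
  [MeasurableSpace E] [BorelSpace E] {f : E → ℝ} {K S : Set E} {u v : E} {c δ : ℝ}

theorem mul_min_localConductance_le (hf : AEMeasurable f) (hK : Convex ℝ K)
    (hKint : (interior K).Nonempty) (hδ : 0 < δ) (hS : NullMeasurableSet S) (hu : u ∈ K)
    (hv : v ∈ K) (huv : dist u v ≤ δ / √(Module.finrank ℝ E)) (hc : 0 ≤ c)
    (hcu : ∀ y ∈ K ∩ closedBall u δ, c ≤ min 1 (f y / f u))
    (hcv : ∀ y ∈ K ∩ closedBall v δ, c ≤ min 1 (f y / f v)) :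
    c / (exp (3 / 2) + 1) * min (localConductance K δ u) (localConductance K δ v) ≤
      speedyTransition f K δ u (K \ S) + speedyTransition f K δ v S := by
  set V := volume.real (closedBall (0 : E) δ)
  have hKS : NullMeasurableSet (K \ S) := (hK.nullMeasurableSet volume).diff hS
  calc c / (exp (3 / 2) + 1) * min (localConductance K δ u) (localConductance K δ v)
      = c / (exp (3 / 2) + 1) *
          (min (volume.real (K ∩ closedBall u δ)) (volume.real (K ∩ closedBall v δ)) / V) := by
        rw [localConductance, localConductance, min_div_div_right measureReal_nonneg]
    _ ≤ c / (exp (3 / 2) + 1) * ((exp (3 / 2) + 1) * volume.real (lens K u v δ) / V) := by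
        gcongr
        exact min_measureReal_closedBall_le volume hK hu hv hδ.le huv
    _ = c * volume.real (lens K u v δ) / V := by field_simp
    _ ≤ c * (volume.real ((K \ S) ∩ K ∩ closedBall u δ) +
          volume.real (S ∩ K ∩ closedBall v δ)) / V := by
        gcongr
        exact measureReal_lens_le_add volume hS
    _ = c * volume.real ((K \ S) ∩ K ∩ closedBall u δ) / V +
          c * volume.real (S ∩ K ∩ closedBall v δ) / V := by ring
    _ ≤ speedyTransition f K δ u (K \ S) + speedyTransition f K δ v S :=
        add_le_add (le_speedyTransition hf hK hKint hu hδ hKS hc hcu)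
          (le_speedyTransition hf hK hKint hv hδ hS hc hcv)

theorem speedy_overlap_general {σ : ℝ} (hσ : 0 < σ) (hK : Convex ℝ K)
    (hKint : (interior K).Nonempty) (hKbdd : K ⊆ closedBall 0 (4 * σ * √(Module.finrank ℝ E)))
    (hδ : 0 < δ) (hδσ : δ ≤ σ / (8 * √(Module.finrank ℝ E))) (hS : NullMeasurableSet S)
    (hu : u ∈ K) (hv : v ∈ K) (huv : dist u v ≤ δ / √(Module.finrank ℝ E)) :
    1 / (exp 1 * (exp 1 + 1)) * min (localConductance K δ u) (localConductance K δ v) ≤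
      speedyTransition (fun x => exp (-‖x‖ ^ 2 / (2 * σ ^ 2))) K δ u (K \ S) +
        speedyTransition (fun x => exp (-‖x‖ ^ 2 / (2 * σ ^ 2))) K δ v S := by
  set R := 4 * σ * √(Module.finrank ℝ E)
  have hn : √(Module.finrank ℝ E) ≠ 0 := fun hn => by
    rw [hn, mul_zero, div_zero] at hδσ
    exact hδ.not_ge hδσ
  have hδR : δ * R / σ ^ 2 ≤ 1 / 2 :=
    calc δ * R / σ ^ 2 ≤ σ / (8 * √(Module.finrank ℝ E)) * R / σ ^ 2 := by gcongr
      _ = 1 / 2 := by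
        simp only [R]
        field_simp
        norm_num
  have hfilter (x : E) (hx : x ∈ K) : ∀ y ∈ K ∩ closedBall x δ, exp (-(1 / 2)) ≤
      min 1 (exp (-‖y‖ ^ 2 / (2 * σ ^ 2)) / exp (-‖x‖ ^ 2 / (2 * σ ^ 2))) := fun y hy =>
    le_min (exp_le_one_iff.2 (by norm_num)) <|
      (exp_le_exp.2 (neg_le_neg hδR)).trans <|
        exp_neg_le_gaussian_div_gaussian σ (mem_closedBall_zero_iff.1 (hKbdd hx))
          (mem_closedBall_zero_iff.1 (hKbdd hy.1)) hy.2
  have hℓ (x : E) : 0 ≤ localConductance K δ x := by unfold localConductance; positivity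
  exact (mul_le_mul_of_nonneg_right one_div_exp_one_mul_le (le_min (hℓ u) (hℓ v))).trans <|
    mul_min_localConductance_le (by fun_prop) hK hKint hδ hS hu hv huv (exp_nonneg _)
      (hfilter u hu) (hfilter v hv)

end SpeedyWalk

/-- Overlap lemma for the speedy walk with Metropolis filter (Lemma 5.1 of the paper):
for a convex body `K` with `B_n ⊆ K ⊆ 4σ√n B_n`, step size `δ ≤ σ/(8√n)`, Gaussian
weight `f(x) = e^{-‖x‖²/(2σ²)}`, local conductance `ℓ` and one-step distribution `P`,
if `S, K∖S` partition `K` and `u ∈ S`, `v ∈ K∖S` with `‖u - v‖ < δ/√n`, then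
`P_u(K∖S) + P_v(S) ≥ min{ℓ(u), ℓ(v)} / (e(e+1))`. -/
theorem speedy_overlap
    (n : ℕ) (σ δ : ℝ) (hσ : 0 < σ)
    (K : Set (EuclideanSpace ℝ (Fin n)))
    (hKconv : Convex ℝ K) (hKcomp : IsCompact K)
    (hKball : closedBall (0 : EuclideanSpace ℝ (Fin n)) 1 ⊆ K)
    (hKbdd : K ⊆ closedBall (0 : EuclideanSpace ℝ (Fin n)) (4 * σ * Real.sqrt n))
    (hδ : 0 < δ) (hδσ : δ ≤ σ / (8 * Real.sqrt n))
    (f : EuclideanSpace ℝ (Fin n) → ℝ)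
    (hf : ∀ x, f x = Real.exp (-‖x‖^2 / (2 * σ^2)))
    (ℓ : EuclideanSpace ℝ (Fin n) → ℝ)
    (hℓ : ∀ x, ℓ x = (volume (K ∩ closedBall x δ)).toReal /
      (volume (closedBall (0 : EuclideanSpace ℝ (Fin n)) δ)).toReal)
    (P : EuclideanSpace ℝ (Fin n) → Set (EuclideanSpace ℝ (Fin n)) → ℝ)
    (hP : ∀ x S, P x S = (∫ y in S ∩ K ∩ closedBall x δ, min 1 (f y / f x)) /
      (volume (K ∩ closedBall x δ)).toReal)
    (S : Set (EuclideanSpace ℝ (Fin n))) (hS : MeasurableSet S) (hSK : S ⊆ K)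
    (u v : EuclideanSpace ℝ (Fin n)) (hu : u ∈ S) (hv : v ∈ K \ S)
    (huv : ‖u - v‖ < δ / Real.sqrt n) :
    (1 / (Real.exp 1 * (Real.exp 1 + 1))) * min (ℓ u) (ℓ v) ≤ P u (K \ S) + P v S := by
  obtain rfl : f = fun x => exp (-‖x‖ ^ 2 / (2 * σ ^ 2)) := funext hf
  obtain rfl : ℓ = localConductance K δ := funext hℓ
  obtain rfl : P = speedyTransition _ K δ := funext₂ hP
  have hKint : (interior K).Nonempty :=
    ⟨0, interior_mono hKball (ball_subset_interior_closedBall (mem_ball_self one_pos))⟩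
  refine speedy_overlap_general hσ hKconv hKint ?_ hδ ?_ hS.nullMeasurableSet (hSK hu) hv.1 ?_ <;>
    rw [finrank_euclideanSpace_fin]
  exacts [hKbdd, hδσ, dist_eq_norm u v ▸ huv.le]
end
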